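/- Let C be a non-circular component of G such that F(μ) < 0 for every loop μ in C. Then there is a unique β₀ ∈ ℝ such that ρ(A(β₀)^C) = 1; this β₀ is negative, and for every β ∈ ℝ one has ρ(A(β)^C) < 1 if and only if β < β₀. -/

import Mathlib

open Filter Finset

/-- The spectral radius of a real matrix, `ρ(M) = lim_n ‖Mⁿ‖^{1/n}`
(computed with the entrywise ℓ¹-norm, and as a `limsup` so that it is always defined;
it is `0` for the matrix over the empty index type). -/
noncomputable def specRad {n : Type*} [Fintype n] [DecidableEq n] (M : Matrix n n ℝ) : ℝ :=
  Filter.limsup (fun k : ℕ => (∑ i, ∑ j, |(M ^ k) i j|) ^ ((1 : ℝ) / (k : ℝ))) Filter.atTop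

/-- The spectral radius `ρ(B^S)` of the submatrix of `B` obtained by restricting to `S × S`. -/
noncomputable def specRadOn {V : Type*} [Fintype V] (B : Matrix V V ℝ) (S : Set V) : ℝ :=
  letI : Fintype S := (Set.toFinite S).fintype
  letI : DecidableEq S := Classical.decEq _
  specRad (fun i j : S => B i.1 j.1)

variable {V E : Type*}

/-- Consecutive edges of the list match up: `r(eᵢ) = s(eᵢ₊₁)`. -/
def ChainOK (src rng : E → V) (μ : List E) : Prop :=
  List.Chain' (fun e f => rng e = src f) μ

/-- A loop: a nonempty path `μ = e₁⋯eₙ` with `s(e₁) = r(eₙ)`. -/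
def IsLoop (src rng : E → V) (μ : List E) : Prop :=
  ∃ h : μ ≠ [], ChainOK src rng μ ∧ src (μ.head h) = rng (μ.getLast h)

/-- A loop lying in the vertex set `C`. -/
def LoopIn (src rng : E → V) (C : Set V) (μ : List E) : Prop :=
  IsLoop src rng μ ∧ ∀ e ∈ μ, src e ∈ C ∧ rng e ∈ C

/-- `v ⤳ w`: there is a (possibly length-0) path from `v` to `w`. -/
def GReaches (src rng : E → V) (v w : V) : Prop :=
  v = w ∨ ∃ μ : List E, ∃ h : μ ≠ [],
    ChainOK src rng μ ∧ src (μ.head h) = v ∧ rng (μ.getLast h) = w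

/-- The closure of a set of vertices: all vertices that reach it. -/
def GClosure (src rng : E → V) (C : Set V) : Set V :=
  {v | ∃ w ∈ C, GReaches src rng v w}

/-- A component: an equivalence class of `v ∼ w` (mutual reachability) containing a loop. -/
def GIsComponent (src rng : E → V) (C : Set V) : Prop :=
  (∃ v, C = {w | GReaches src rng v w ∧ GReaches src rng w v}) ∧
  ∃ μ : List E, LoopIn src rng C μ

/-- The property that the loop `μ` witnesses circularity of the component `C`: `μ` is a simple
loop visiting every vertex of `C`, and containing every edge of the graph joining vertices
of `C`. -/
def CircularWitness (src rng : E → V) (C : Set V) (μ : List E) : Prop :=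
  LoopIn src rng C μ ∧ (μ.map src).Nodup ∧
  (∀ v ∈ C, v ∈ μ.map src) ∧
  (∀ e : E, src e ∈ C → rng e ∈ C → e ∈ μ)

/-- A circular component: a component containing, up to the choice of starting vertex,
exactly one loop. -/
def IsCircular (src rng : E → V) (C : Set V) : Prop :=
  GIsComponent src rng C ∧ ∃ μ : List E, CircularWitness src rng C μ

/-- The matrix `A(β)` with entries `A(β)_{vw} = Σ_{e : v → w} e^{-β F(e)}`. -/
noncomputable def Amat [Fintype E] [DecidableEq V] (src rng : E → V) (F : E → ℝ) (β : ℝ) :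
    Matrix V V ℝ :=
  fun v w => ∑ e ∈ Finset.univ.filter (fun e => src e = v ∧ rng e = w), Real.exp (-β * F e)

/-- `F` extended to paths: `F(e₁⋯eₙ) = F(e₁) + ⋯ + F(eₙ)`. -/
def Fpath (F : E → ℝ) (μ : List E) : ℝ := (μ.map F).sum

/-! ### Spectral radius estimates -/

section Analysis

variable {n : Type*} [Fintype n] [DecidableEq n]

/-- entrywise l1 norm -/
noncomputable def l1n (M : Matrix n n ℝ) : ℝ := ∑ i, ∑ j, |M i j|

theorem l1n_nonneg (M : Matrix n n ℝ) : 0 ≤ l1n M :=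
  Finset.sum_nonneg fun _ _ => Finset.sum_nonneg fun _ _ => abs_nonneg _

theorem l1n_mul (A B : Matrix n n ℝ) : l1n (A * B) ≤ l1n A * l1n B := by
  unfold l1n
  rw [Finset.sum_mul]
  refine Finset.sum_le_sum fun i _ => ?_
  rw [Finset.sum_mul]
  calc ∑ j, |(A * B) i j| ≤ ∑ j, ∑ k, |A i k| * |B k j| := by
        refine Finset.sum_le_sum fun j _ => ?_
        rw [Matrix.mul_apply]
        refine (Finset.abs_sum_le_sum_abs _ _).trans (le_of_eq ?_)
        simp [abs_mul]
    _ = ∑ k, |A i k| * ∑ j, |B k j| := by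
        rw [Finset.sum_comm]; simp [Finset.mul_sum]
    _ ≤ _ := by
        refine Finset.sum_le_sum fun k _ => ?_
        refine mul_le_mul_of_nonneg_left ?_ (abs_nonneg _)
        exact Finset.single_le_sum (f := fun k => ∑ j, |B k j|)
          (fun _ _ => Finset.sum_nonneg fun _ _ => abs_nonneg _) (Finset.mem_univ k)

theorem l1n_pow (A : Matrix n n ℝ) (k : ℕ) : l1n (A ^ (k + 1)) ≤ l1n A ^ (k + 1) := by
  induction k with
  | zero => simp
  | succ k ih =>
    rw [pow_succ, pow_succ (l1n A)]
    exact (l1n_mul _ _).trans (mul_le_mul_of_nonneg_right ih (l1n_nonneg _))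

theorem specRad_eq (M : Matrix n n ℝ) :
    specRad M = limsup (fun k : ℕ => (l1n (M ^ k)) ^ ((1 : ℝ) / (k : ℝ))) atTop := rfl

theorem root_nonneg (M : Matrix n n ℝ) (k : ℕ) : 0 ≤ (l1n (M ^ k)) ^ ((1 : ℝ) / (k : ℝ)) :=
  Real.rpow_nonneg (l1n_nonneg _) _

theorem root_le (M : Matrix n n ℝ) (k : ℕ) (hk : 0 < k) :
    (l1n (M ^ k)) ^ ((1 : ℝ) / (k : ℝ)) ≤ l1n M := by
  obtain ⟨m, rfl⟩ : ∃ m, k = m + 1 := ⟨k - 1, by omega⟩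
  calc (l1n (M ^ (m+1))) ^ ((1 : ℝ) / ((m+1 : ℕ) : ℝ))
      ≤ (l1n M ^ (m+1)) ^ ((1 : ℝ) / ((m+1 : ℕ) : ℝ)) :=
        Real.rpow_le_rpow (l1n_nonneg _) (l1n_pow M m) (by positivity)
    _ = l1n M := by
        rw [one_div, Real.pow_rpow_inv_natCast (l1n_nonneg _) (by omega)]

theorem root_bdd (M : Matrix n n ℝ) :
    IsBoundedUnder (· ≤ ·) atTop (fun k : ℕ => (l1n (M ^ k)) ^ ((1 : ℝ) / (k : ℝ))) :=
  isBoundedUnder_of_eventually_le (a := l1n M)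
    ((eventually_gt_atTop 0).mono fun k hk => root_le M k hk)

theorem specRad_compare (A B : Matrix n n ℝ) (c L : ℝ)
    (h : ∀ k : ℕ, Real.exp (c * k - L) * l1n (A ^ k) ≤ l1n (B ^ k)) :
    Real.exp c * specRad A ≤ specRad B := by
  set u : ℕ → ℝ := fun k => (l1n (A ^ k)) ^ ((1 : ℝ) / (k : ℝ)) with hu
  set w : ℕ → ℝ := fun k => (l1n (B ^ k)) ^ ((1 : ℝ) / (k : ℝ)) with hw
  set v : ℕ → ℝ := fun k => Real.exp (c - L / k) with hv
  have hvt : Tendsto v atTop (nhds (Real.exp c)) := by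
    have : Tendsto (fun k : ℕ => c - L / (k : ℝ)) atTop (nhds (c - 0)) :=
      tendsto_const_nhds.sub (tendsto_const_div_atTop_nhds_zero_nat L)
    rw [sub_zero] at this
    exact (Real.continuous_exp.tendsto c).comp this
  have h1 := le_limsup_mul (f := atTop) (u := u) (v := v)
    (Frequently.of_forall fun k => root_nonneg A k) (root_bdd A)
    (Eventually.of_forall fun k => (Real.exp_pos _).le) hvt.isBoundedUnder_le
  rw [hvt.liminf_eq] at h1
  have h2 : limsup (u * v) atTop ≤ limsup w atTop := by
    refine limsup_le_limsup ?_ ?_ (root_bdd B)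
    · filter_upwards [eventually_gt_atTop 0] with k hk
      have hk' : (0 : ℝ) < k := by exact_mod_cast hk
      have := Real.rpow_le_rpow (z := (1 : ℝ) / k)
        (mul_nonneg (Real.exp_pos _).le (l1n_nonneg _)) (h k) (by positivity)
      rw [Real.mul_rpow (Real.exp_pos _).le (l1n_nonneg _), ← Real.exp_mul] at this
      have e : (c * k - L) * (1 / k) = c - L / k := by field_simp
      rw [e, mul_comm] at this
      exact this
    · exact IsCoboundedUnder.of_frequently_ge (a := 0)
        (Frequently.of_forall fun k => mul_nonneg (root_nonneg A k) (Real.exp_pos _).le)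
  rw [specRad_eq, specRad_eq, mul_comm]
  exact h1.trans h2

theorem pow_entry_nonneg (A : Matrix n n ℝ) (hA : ∀ i j, 0 ≤ A i j) (k : ℕ) :
    ∀ i j, 0 ≤ (A ^ k) i j := by
  induction k with
  | zero => intro i j; simp only [pow_zero, Matrix.one_apply]; split_ifs <;> norm_num
  | succ k ih =>
    intro i j
    rw [pow_succ, Matrix.mul_apply]
    exact Finset.sum_nonneg fun u _ => mul_nonneg (ih _ _) (hA _ _)

theorem pow_compare (A B : Matrix n n ℝ) (hA : ∀ i j, 0 ≤ A i j) (c : ℝ) (g : n → ℝ)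
    (h : ∀ i j, Real.exp (c + g j - g i) * A i j ≤ B i j) (k : ℕ) :
    ∀ i j, Real.exp (c * k + g j - g i) * (A ^ k) i j ≤ (B ^ k) i j := by
  have hB : ∀ i j, 0 ≤ B i j := fun i j =>
    (mul_nonneg (Real.exp_pos _).le (hA i j)).trans (h i j)
  induction k with
  | zero =>
    intro i j
    by_cases hij : i = j
    · subst hij; simp
    · simp [hij]
  | succ k ih =>
    intro i j
    rw [pow_succ, pow_succ, Matrix.mul_apply, Matrix.mul_apply, Finset.mul_sum]
    refine Finset.sum_le_sum fun u _ => ?_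
    have := mul_le_mul (ih i u) (h u j) (mul_nonneg (Real.exp_pos _).le (hA _ _))
      (pow_entry_nonneg B hB k i u)
    refine le_trans (le_of_eq ?_) this
    have e : Real.exp (c * ((k + 1 : ℕ) : ℝ) + g j - g i)
        = Real.exp (c * k + g u - g i) * Real.exp (c + g j - g u) := by
      rw [← Real.exp_add]; congr 1; push_cast; ring
    rw [e]; ring

theorem specRad_compare' (A B : Matrix n n ℝ) (hA : ∀ i j, 0 ≤ A i j) (c : ℝ) (g : n → ℝ)
    (h : ∀ i j, Real.exp (c + g j - g i) * A i j ≤ B i j) :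
    Real.exp c * specRad A ≤ specRad B := by
  have hB : ∀ i j, 0 ≤ B i j := fun i j =>
    (mul_nonneg (Real.exp_pos _).le (hA i j)).trans (h i j)
  refine specRad_compare A B c (2 * ∑ i, |g i|) fun k => ?_
  unfold l1n
  rw [Finset.mul_sum]
  refine Finset.sum_le_sum fun i _ => ?_
  rw [Finset.mul_sum]
  refine Finset.sum_le_sum fun j _ => ?_
  rw [abs_of_nonneg (pow_entry_nonneg A hA k i j), abs_of_nonneg (pow_entry_nonneg B hB k i j)]
  refine le_trans ?_ (pow_compare A B hA c g h k i j)
  refine mul_le_mul_of_nonneg_right ?_ (pow_entry_nonneg A hA k i j)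
  rw [Real.exp_le_exp]
  have hs : ∀ i, |g i| ≤ ∑ i, |g i| := fun i =>
    Finset.single_le_sum (f := fun i => |g i|) (fun _ _ => abs_nonneg _) (Finset.mem_univ i)
  have := hs i
  have := hs j
  have := neg_abs_le (g j)
  have := le_abs_self (g i)
  linarith

theorem entry_le_l1n (M : Matrix n n ℝ) (i j : n) : M i j ≤ l1n M := by
  refine (le_abs_self _).trans ?_
  refine (Finset.single_le_sum (f := fun j => |M i j|) (fun _ _ => abs_nonneg _)
    (Finset.mem_univ j)).trans ?_
  exact Finset.single_le_sum (f := fun i => ∑ j, |M i j|)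
    (fun _ _ => Finset.sum_nonneg fun _ _ => abs_nonneg _) (Finset.mem_univ i)

theorem diag_pow_ge (A : Matrix n n ℝ) (hA : ∀ i j, 0 ≤ A i j) (i : n) (q : ℝ) (hq : 0 ≤ q)
    (h : q ≤ A i i) (m : ℕ) : q ^ m ≤ (A ^ m) i i := by
  induction m with
  | zero => simp
  | succ m ih =>
    rw [pow_succ, pow_succ, Matrix.mul_apply]
    refine le_trans ?_ (Finset.single_le_sum (f := fun u => (A ^ m) i u * A u i)
      (fun u _ => mul_nonneg (pow_entry_nonneg A hA m i u) (hA u i)) (Finset.mem_univ i))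
    exact mul_le_mul ih h hq (pow_entry_nonneg A hA m i i)

theorem one_lt_specRad (A : Matrix n n ℝ) (hA : ∀ i j, 0 ≤ A i j) (i : n) (N : ℕ) (hN : 0 < N)
    (h : 2 ≤ (A ^ N) i i) : 1 < specRad A := by
  have hN' : (0 : ℝ) < N := by exact_mod_cast hN
  have h1 : (1 : ℝ) < 2 ^ ((1 : ℝ) / N) := Real.one_lt_rpow (by norm_num) (by positivity)
  refine h1.trans_le ?_
  rw [specRad_eq]
  refine le_limsup_of_frequently_le ?_ (root_bdd A)
  rw [frequently_atTop]
  intro a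
  refine ⟨N * (a + 1), ?_, ?_⟩
  · nlinarith
  · have h2 : (2 : ℝ) ^ (a + 1) ≤ l1n (A ^ (N * (a + 1))) := by
      rw [pow_mul]
      exact (diag_pow_ge (A ^ N) (pow_entry_nonneg A hA N) i 2 (by norm_num) h (a + 1)).trans
        (entry_le_l1n _ _ _)
    refine le_trans (le_of_eq ?_) (Real.rpow_le_rpow (by positivity) h2 (by positivity))
    rw [← Real.rpow_natCast, ← Real.rpow_mul (by norm_num)]
    congr 1
    push_cast
    field_simp

/-- The real-variable part of the argument. -/
theorem real_part (ρ : ℝ → ℝ) (c K : ℝ) (hc : 0 < c) (h0 : 1 < ρ 0)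
    (hlo : ∀ β t, 0 ≤ t → Real.exp (t * c) * ρ β ≤ ρ (β + t))
    (hup : ∀ β t, 0 ≤ t → Real.exp (-(t * K)) * ρ (β + t) ≤ ρ β) :
    ∃ β₀ : ℝ, β₀ < 0 ∧ ρ β₀ = 1 ∧ (∀ β, ρ β = 1 → β = β₀) ∧ (∀ β, ρ β < 1 ↔ β < β₀) := by
  have hpos : ∀ β, 0 < ρ β := by
    intro β
    rcases le_total 0 β with hβ | hβ
    · have := hlo 0 β hβ
      rw [zero_add] at this
      exact (mul_pos (Real.exp_pos _) (by linarith)).trans_le this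
    · have := hup β (-β) (by linarith)
      rw [add_neg_cancel] at this
      exact (mul_pos (Real.exp_pos _) (by linarith)).trans_le this
  have hmono : StrictMono ρ := by
    intro a b hab
    have := hlo a (b - a) (by linarith)
    rw [add_sub_cancel] at this
    refine lt_of_lt_of_le ?_ this
    have h1 : 1 < Real.exp ((b - a) * c) :=
      Real.one_lt_exp_iff.2 (mul_pos (by linarith) hc)
    nlinarith [hpos a]
  set g : ℝ → ℝ := fun β => Real.log (ρ β) with hg
  have hgl : ∀ a b, a ≤ b → |g b - g a| ≤ K * (b - a) := by
    intro a b hab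
    have h1 := hup a (b - a) (by linarith)
    rw [add_sub_cancel] at h1
    have h2 := Real.log_le_log (mul_pos (Real.exp_pos _) (hpos b)) h1
    rw [Real.log_mul (Real.exp_pos _).ne' (hpos b).ne', Real.log_exp] at h2
    have h3 : g a ≤ g b := Real.log_le_log (hpos a) (hmono.monotone hab)
    rw [abs_of_nonneg (by linarith)]
    simp only [hg]
    linarith
  have hgc : Continuous g := by
    have : LipschitzWith (Real.toNNReal K) g := by
      refine LipschitzWith.of_dist_le_mul fun x y => ?_
      have hk : K ≤ (Real.toNNReal K : ℝ) := Real.le_coe_toNNReal K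
      rw [Real.dist_eq, Real.dist_eq]
      rcases le_total x y with h | h
      · have := hgl x y h
        rw [abs_sub_comm, abs_sub_comm x y, abs_of_nonneg (sub_nonneg.2 h)]
        exact this.trans (mul_le_mul_of_nonneg_right hk (sub_nonneg.2 h))
      · have := hgl y x h
        rw [abs_of_nonneg (sub_nonneg.2 h)]
        exact this.trans (mul_le_mul_of_nonneg_right hk (sub_nonneg.2 h))
    exact this.continuous
  set T := Real.log (ρ 0) / c with hT
  have hlog : 0 < Real.log (ρ 0) := Real.log_pos h0
  have hT0 : 0 < T := div_pos hlog hc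
  have hlow : g (-T) ≤ 0 := by
    have := hlo (-T) T hT0.le
    rw [neg_add_cancel] at this
    have h2 := Real.log_le_log (mul_pos (Real.exp_pos _) (hpos _)) this
    rw [Real.log_mul (Real.exp_pos _).ne' (hpos _).ne', Real.log_exp] at h2
    have : T * c = Real.log (ρ 0) := by rw [hT]; field_simp
    simp only [hg]
    linarith
  obtain ⟨b, _, hb⟩ := intermediate_value_Icc (by linarith : -T ≤ 0) hgc.continuousOn
    (show (0 : ℝ) ∈ Set.Icc (g (-T)) (g 0) from ⟨hlow, hlog.le⟩)
  have hb1 : ρ b = 1 := by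
    have := Real.exp_log (hpos b)
    simp only [hg] at hb
    rw [hb, Real.exp_zero] at this
    exact this.symm
  refine ⟨b, ?_, hb1, ?_, ?_⟩
  · rw [← hmono.lt_iff_lt, hb1]; exact h0
  · intro β hβ
    exact hmono.injective (hβ.trans hb1.symm)
  · intro β
    rw [← hb1]; exact hmono.lt_iff_lt

end Analysis

/-! ### Walks inside a set of vertices -/

section Walks

variable {W D : Type*} (src rng : D → W) (C : Set W)

/-- `μ` is a walk from `v` to `w` whose edges join vertices of `C`. -/
def Wk : W → List D → W → Prop
  | v, [], w => v = w
  | v, e :: μ, w => src e = v ∧ src e ∈ C ∧ rng e ∈ C ∧ Wk (rng e) μ w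

theorem wk_append (a b : List D) (v w : W) :
    Wk src rng C v (a ++ b) w ↔ ∃ u, Wk src rng C v a u ∧ Wk src rng C u b w := by
  induction a generalizing v with
  | nil => simp [Wk]
  | cons e a ih => simp [Wk, ih, and_assoc]

theorem wk_data (μ : List D) (v w : W) (h : Wk src rng C v μ w) (hne : μ ≠ []) :
    ChainOK src rng μ ∧ src (μ.head hne) = v ∧ rng (μ.getLast hne) = w ∧
      ∀ e ∈ μ, src e ∈ C ∧ rng e ∈ C := by
  induction μ generalizing v with
  | nil => exact absurd rfl hne
  | cons e μ ih =>
    obtain ⟨h1, h2, h3, h4⟩ := h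
    cases μ with
    | nil =>
      refine ⟨List.isChain_singleton _, h1, h4, ?_⟩
      simpa using ⟨h2, h3⟩
    | cons f μ =>
      obtain ⟨i1, i2, i3, i4⟩ := ih (rng e) h4 (by simp)
      refine ⟨?_, h1, ?_, ?_⟩
      · exact List.isChain_cons_cons.2 ⟨i2.symm, i1⟩
      · simpa using i3
      · intro x hx
        rcases List.mem_cons.1 hx with rfl | hx
        · exact ⟨h2, h3⟩
        · exact i4 x hx

theorem wk_of_data (μ : List D) (hne : μ ≠ []) (h : ChainOK src rng μ)
    (hC : ∀ e ∈ μ, src e ∈ C ∧ rng e ∈ C) :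
    Wk src rng C (src (μ.head hne)) μ (rng (μ.getLast hne)) := by
  induction μ with
  | nil => exact absurd rfl hne
  | cons e μ ih =>
    have he := hC e (by simp)
    refine ⟨rfl, he.1, he.2, ?_⟩
    cases μ with
    | nil => rfl
    | cons f μ =>
      obtain ⟨h1, h2⟩ := List.isChain_cons_cons.1 h
      have := ih (by simp) h2 (fun x hx => hC x (List.mem_cons_of_mem _ hx))
      simp only [List.head_cons] at this
      rw [h1]
      simpa using this

theorem wk_loopIn (μ : List D) (v : W) (h : Wk src rng C v μ v) (hne : μ ≠ []) :
    LoopIn src rng C μ := by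
  obtain ⟨h1, h2, h3, h4⟩ := wk_data src rng C μ v v h hne
  exact ⟨⟨hne, h1, h2.trans h3.symm⟩, h4⟩

theorem loopIn_wk (μ : List D) (h : LoopIn src rng C μ) :
    μ ≠ [] ∧ ∃ v ∈ C, Wk src rng C v μ v := by
  obtain ⟨⟨hne, h1, h2⟩, h3⟩ := h
  refine ⟨hne, _, (h3 _ (List.head_mem hne)).1, ?_⟩
  have := wk_of_data src rng C μ hne h1 h3
  rwa [← h2] at this

theorem greaches_iff (v w : W) :
    GReaches src rng v w ↔ ∃ μ, Wk src rng Set.univ v μ w := by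
  constructor
  · rintro (rfl | ⟨μ, hne, h1, rfl, rfl⟩)
    · exact ⟨[], rfl⟩
    · exact ⟨μ, wk_of_data src rng _ μ hne h1 (by simp)⟩
  · rintro ⟨μ, h⟩
    by_cases hne : μ = []
    · subst hne; exact Or.inl h
    · obtain ⟨h1, h2, h3, _⟩ := wk_data src rng _ μ v w h hne
      exact Or.inr ⟨μ, hne, h1, h2, h3⟩

theorem greaches_trans (u v w : W) (h1 : GReaches src rng u v) (h2 : GReaches src rng v w) :
    GReaches src rng u w := by
  rw [greaches_iff] at *
  obtain ⟨a, ha⟩ := h1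
  obtain ⟨b, hb⟩ := h2
  exact ⟨a ++ b, (wk_append _ _ _ _ _ _ _).2 ⟨v, ha, hb⟩⟩

theorem comp_connected (hC : GIsComponent src rng C) (v w : W) (hv : v ∈ C) (hw : w ∈ C) :
    ∃ μ, Wk src rng C v μ w := by
  obtain ⟨⟨x, hx⟩, -⟩ := hC
  have key : ∀ (μ : List D) (v : W), v ∈ C → Wk src rng Set.univ v μ w →
      Wk src rng C v μ w := by
    intro μ
    induction μ with
    | nil => intro v _ h; exact h
    | cons e μ ih =>
      rintro v hv ⟨h1, -, -, h4⟩
      have hr : rng e ∈ C := by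
        rw [hx] at hv hw ⊢
        refine ⟨greaches_trans src rng _ _ _ hv.1 ?_, greaches_trans src rng _ _ _ ?_ hw.2⟩
        · rw [greaches_iff]
          exact ⟨[e], h1, trivial, trivial, rfl⟩
        · rw [greaches_iff]
          exact ⟨μ, h4⟩
      exact ⟨h1, h1 ▸ hv, hr, ih _ hr h4⟩
  have hvw : GReaches src rng v w := by
    rw [hx] at hv hw
    exact greaches_trans src rng _ _ _ hv.2 hw.1
  obtain ⟨μ, hμ⟩ := (greaches_iff src rng v w).1 hvw
  exact ⟨μ, key μ v hv hμ⟩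

theorem split_dup (μ : List D) (h : ¬ (μ.map src).Nodup) :
    ∃ a e b f d, μ = a ++ (e :: b ++ f :: d) ∧ src e = src f := by
  induction μ with
  | nil => simp at h
  | cons e μ ih =>
    by_cases he : src e ∈ μ.map src
    · obtain ⟨f, hf, hfe⟩ := List.mem_map.1 he
      obtain ⟨b, d, rfl⟩ := List.append_of_mem hf
      exact ⟨[], e, b, f, d, rfl, hfe.symm⟩
    · have : ¬ (μ.map src).Nodup := fun h' => h (by
        rw [List.map_cons]; exact List.nodup_cons.2 ⟨he, h'⟩)
      obtain ⟨a, e', b, f, d, rfl, hf⟩ := ih this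
      exact ⟨e :: a, e', b, f, d, rfl, hf⟩

theorem wk_split (μ : List D) (v w : W) (hw : Wk src rng C v μ w) (h : ¬ (μ.map src).Nodup) :
    ∃ a b d u, μ = a ++ (b ++ d) ∧ b ≠ [] ∧ d ≠ [] ∧ Wk src rng C v a u ∧
      Wk src rng C u b u ∧ Wk src rng C u d w := by
  obtain ⟨a, e, b, f, d, rfl, hf⟩ := split_dup src μ h
  obtain ⟨u, h1, h2⟩ := (wk_append _ _ _ _ _ _ _).1 hw
  obtain ⟨u', h3, h4⟩ := (wk_append _ _ _ _ _ _ _).1 h2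
  have : u' = u := by rw [← h4.1, ← hf, h3.1]
  subst this
  exact ⟨a, e :: b, f :: d, u', rfl, by simp, by simp, h1, h3, h4⟩

/-- A non-circular component has a vertex with two outgoing edges in it. -/
theorem exists_branch (hC : GIsComponent src rng C) (hnc : ¬ IsCircular src rng C) :
    ∃ e f, e ≠ f ∧ src e = src f ∧ src e ∈ C ∧ rng e ∈ C ∧ rng f ∈ C := by
  by_contra hcon
  have huniq : ∀ e f, src e = src f → src e ∈ C → rng e ∈ C → rng f ∈ C → e = f := by
    intro e f h1 h2 h3 h4
    by_contra hef
    exact hcon ⟨e, f, hef, h1, h2, h3, h4⟩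
  have hex : ∃ N, ∃ μ, LoopIn src rng C μ ∧ μ.length = N := by
    obtain ⟨μ, hμ⟩ := hC.2
    exact ⟨_, μ, hμ, rfl⟩
  classical
  obtain ⟨μ, hμ, hlen⟩ := Nat.find_spec hex
  have hmin : ∀ ν, LoopIn src rng C ν → μ.length ≤ ν.length := by
    intro ν hν
    rw [hlen]
    exact Nat.find_min' hex ⟨ν, hν, rfl⟩
  obtain ⟨hne, v, hv, hw⟩ := loopIn_wk src rng C μ hμ
  have hnd : (μ.map src).Nodup := by
    by_contra h
    obtain ⟨a, b, d, u, rfl, hb, hd, -, h2, -⟩ := wk_split src rng C μ v v hw h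
    have h1 := hmin b (wk_loopIn src rng C b u h2 hb)
    have := List.length_pos_iff.2 hd
    simp only [List.length_append] at h1
    omega
  have hvm : v ∈ μ.map src := by
    obtain ⟨-, h2, -⟩ := wk_data src rng C μ v v hw hne
    rw [← h2]
    exact List.mem_map_of_mem (List.head_mem hne)
  have hstep : ∀ e ∈ μ, rng e ∈ μ.map src := by
    intro e he
    obtain ⟨a, b, hab⟩ := List.append_of_mem he
    rw [hab] at hw
    obtain ⟨u, -, h2⟩ := (wk_append _ _ _ _ _ _ _).1 hw
    obtain ⟨-, -, -, h3⟩ := h2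
    cases b with
    | nil => rw [show rng e = v from h3]; exact hvm
    | cons f b =>
      rw [← h3.1]
      exact List.mem_map_of_mem (by rw [hab]; simp)
  have hmem : ∀ e, src e ∈ μ.map src → src e ∈ C → rng e ∈ C → e ∈ μ := by
    intro e h1 h2 h3
    obtain ⟨f, hf, hfe⟩ := List.mem_map.1 h1
    have := huniq e f hfe.symm h2 h3 (hμ.2 f hf).2
    rwa [this]
  have hreach : ∀ (ν : List D) (x w : W), Wk src rng C x ν w → x ∈ μ.map src →
      w ∈ μ.map src := by
    intro ν
    induction ν with
    | nil => intro x w h hx; rw [← show x = w from h]; exact hx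
    | cons e ν ih =>
      rintro x w ⟨h1, h2, h3, h4⟩ hx
      exact ih _ _ h4 (hstep e (hmem e (h1 ▸ hx) h2 h3))
  have hall : ∀ x ∈ C, x ∈ μ.map src := by
    intro x hx
    obtain ⟨ν, hν⟩ := comp_connected src rng C hC v x hv hx
    exact hreach ν v x hν hvm
  exact hnc ⟨hC, μ, hμ, hnd, hall, fun e h1 h2 => hmem e (hall _ h1) h1 h2⟩

theorem fpath_append (F : D → ℝ) (a b : List D) : Fpath F (a ++ b) = Fpath F a + Fpath F b := by
  simp [Fpath]

/-- A potential making every edge weight uniformly negative. -/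
theorem exists_potential [Fintype W] [Fintype D] (F : D → ℝ)
    (hF : ∀ μ : List D, LoopIn src rng C μ → Fpath F μ < 0) :
    ∃ (c : ℝ) (h : W → ℝ), 0 < c ∧
      ∀ e, src e ∈ C → rng e ∈ C → c + h (rng e) - h (src e) ≤ - F e := by
  set n := Fintype.card W with hn
  have hfin : {l : List D | l.length ≤ n}.Finite := List.finite_length_le D n
  have hfin2 : {l : List D | l.length ≤ n ∧ LoopIn src rng C l}.Finite :=
    hfin.subset fun l hl => hl.1
  obtain ⟨δ, hδ, hδl⟩ : ∃ δ > 0, ∀ l : List D, l.length ≤ n → LoopIn src rng C l →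
      Fpath F l ≤ -δ := by
    by_cases hem : {l : List D | l.length ≤ n ∧ LoopIn src rng C l}.Nonempty
    · obtain ⟨m, hm, hmax⟩ := Set.exists_max_image _ (Fpath F) hfin2 hem
      refine ⟨-Fpath F m, ?_, fun l h1 h2 => ?_⟩
      · have := hF m hm.2; linarith
      · have := hmax l ⟨h1, h2⟩; linarith
    · exact ⟨1, one_pos, fun l h1 h2 => absurd ⟨l, h1, h2⟩ hem⟩
  set c := δ / (n + 1) with hc
  have hc0 : 0 < c := by positivity
  have hcn : c * (n + 1) = δ := by rw [hc]; field_simp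
  set G : List D → ℝ := fun l => Fpath F l + c * l.length with hG
  have hGa : ∀ a b, G (a ++ b) = G a + G b := by
    intro a b
    simp only [hG, fpath_append, List.length_append]; push_cast; ring
  have hlong : ∀ l : List D, n < l.length → ¬ (l.map src).Nodup := by
    intro l hl hnd
    have := List.Nodup.length_le_card hnd
    rw [List.length_map] at this
    omega
  have hloop : ∀ (N : ℕ) (l : List D) (v : W), l.length ≤ N → Wk src rng C v l v → G l ≤ 0 := by
    intro N
    induction N with
    | zero =>
      intro l v hl _
      have : l = [] := List.length_eq_zero_iff.1 (by omega)
      subst this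
      simp [hG, Fpath]
    | succ N ih =>
      intro l v hl hw
      by_cases hne : l = []
      · subst hne; simp [hG, Fpath]
      rcases le_or_gt l.length n with hln | hln
      · have h1 := hδl l hln (wk_loopIn src rng C l v hw hne)
        have h2 : (l.length : ℝ) ≤ n := by exact_mod_cast hln
        simp only [hG]
        nlinarith
      · obtain ⟨a, b, d, u, rfl, hb, hd, h1, h2, h3⟩ :=
          wk_split src rng C l v v hw (hlong l hln)
        have hb' := List.length_pos_iff.2 hb
        have hd' := List.length_pos_iff.2 hd
        simp only [List.length_append] at hl
        have i1 := ih b u (by omega) h2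
        have i2 := ih (a ++ d) v (by rw [List.length_append]; omega)
          ((wk_append _ _ _ _ _ _ _).2 ⟨u, h1, h3⟩)
        rw [hGa] at i2
        rw [hGa, hGa]
        linarith
  obtain ⟨B, hB⟩ := (hfin.image G).bddAbove
  have hpath : ∀ (N : ℕ) (l : List D) (v w : W), l.length ≤ N → Wk src rng C v l w →
      G l ≤ B := by
    intro N
    induction N with
    | zero =>
      intro l v w hl _
      exact hB ⟨l, by simp only [Set.mem_setOf_eq]; omega, rfl⟩
    | succ N ih =>
      intro l v w hl hw
      rcases le_or_gt l.length n with hln | hln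
      · exact hB ⟨l, hln, rfl⟩
      · obtain ⟨a, b, d, u, rfl, hb, hd, h1, h2, h3⟩ :=
          wk_split src rng C l v w hw (hlong l hln)
        have hb' := List.length_pos_iff.2 hb
        simp only [List.length_append] at hl
        have i1 := hloop _ b u le_rfl h2
        have i2 := ih (a ++ d) v w (by rw [List.length_append]; omega)
          ((wk_append _ _ _ _ _ _ _).2 ⟨u, h1, h3⟩)
        rw [hGa] at i2
        rw [hGa, hGa]
        linarith
  set S : W → Set ℝ := fun v => {x | ∃ l w, Wk src rng C v l w ∧ x = G l} with hS
  have hSb : ∀ v, BddAbove (S v) := by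
    intro v
    refine ⟨B, ?_⟩
    rintro x ⟨l, w, hl, rfl⟩
    exact hpath _ l v w le_rfl hl
  have hSn : ∀ v, (S v).Nonempty := fun v => ⟨_, [], v, rfl, rfl⟩
  refine ⟨c, fun v => sSup (S v), hc0, fun e h1 h2 => ?_⟩
  have : sSup (S (rng e)) ≤ sSup (S (src e)) - F e - c := by
    refine csSup_le (hSn _) ?_
    rintro x ⟨l, w, hl, rfl⟩
    have h3 : G (e :: l) ≤ sSup (S (src e)) :=
      le_csSup (hSb _) ⟨e :: l, w, ⟨rfl, h1, h2, hl⟩, rfl⟩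
    have h4 : G (e :: l) = F e + c + G l := by
      simp only [hG, Fpath, List.map_cons, List.sum_cons, List.length_cons]
      push_cast; ring
    linarith
  simp only
  linarith

end Walks

/-! ### The restricted matrices -/

section Restricted

variable {W D : Type*} [Fintype W] [DecidableEq W] [Fintype D] (src rng : D → W) (C : Set W)

/-- The restriction of `A(β)` to `C`. -/
noncomputable def Mres (F : D → ℝ) (β : ℝ) : Matrix C C ℝ :=
  fun i j => Amat src rng F β i.1 j.1

theorem mres_nonneg (F : D → ℝ) (β : ℝ) (i j : C) : 0 ≤ Mres src rng C F β i j :=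
  Finset.sum_nonneg fun _ _ => (Real.exp_pos _).le

theorem mres_lower (F : D → ℝ) (c : ℝ) (h : W → ℝ)
    (hh : ∀ e, src e ∈ C → rng e ∈ C → c + h (rng e) - h (src e) ≤ - F e)
    (β t : ℝ) (ht : 0 ≤ t) (i j : C) :
    Real.exp (t * c + t * h j - t * h i) * Mres src rng C F β i j
      ≤ Mres src rng C F (β + t) i j := by
  unfold Mres Amat
  rw [Finset.mul_sum]
  refine Finset.sum_le_sum fun e he => ?_
  obtain ⟨-, h1, h2⟩ := Finset.mem_filter.1 he
  rw [← Real.exp_add, Real.exp_le_exp]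
  have := mul_le_mul_of_nonneg_left (hh e (h1 ▸ i.2) (h2 ▸ j.2)) ht
  rw [h1, h2] at this
  nlinarith

theorem mres_upper (F : D → ℝ) (β t : ℝ) (ht : 0 ≤ t) (i j : C) :
    Real.exp (-(t * ∑ e, |F e|) + 0 - 0) * Mres src rng C F (β + t) i j
      ≤ Mres src rng C F β i j := by
  unfold Mres Amat
  rw [Finset.mul_sum]
  refine Finset.sum_le_sum fun e he => ?_
  rw [← Real.exp_add, Real.exp_le_exp]
  have h1 : |F e| ≤ ∑ e, |F e| :=
    Finset.single_le_sum (f := fun e => |F e|) (fun _ _ => abs_nonneg _) (Finset.mem_univ e)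
  have h2 := neg_abs_le (F e)
  have h3 : -(∑ e, |F e|) ≤ F e := by linarith
  have := mul_le_mul_of_nonneg_left h3 ht
  nlinarith

variable [Fintype C] [DecidableEq C]

theorem mres_branch (F : D → ℝ) (e f : D) (hef : e ≠ f) (i a b : C) (he : src e = i)
    (hf : src f = i) (ha : rng e = a) (hb : rng f = b) (P : Matrix C C ℝ)
    (hP : ∀ x y, 0 ≤ P x y) (j : C) :
    P a j + P b j ≤ (Mres src rng C F 0 * P) i j := by
  have h1 : ∀ w : C, (if a = w then (1 : ℝ) else 0) + (if b = w then 1 else 0)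
      ≤ Mres src rng C F 0 i w := by
    intro w
    have : Mres src rng C F 0 i w
        = ∑ x : D, if (src x = i ∧ rng x = w) then (1 : ℝ) else 0 := by
      unfold Mres Amat
      rw [Finset.sum_filter]
      simp
    rw [this]
    classical
    refine le_trans ?_ (Finset.sum_le_sum_of_subset_of_nonneg (s := {e, f})
      (Finset.subset_univ _) (fun x _ _ => by split_ifs <;> norm_num))
    rw [Finset.sum_pair hef]
    simp [he, hf, ha, hb, Subtype.ext_iff]
  rw [Matrix.mul_apply]
  calc P a j + P b j = ∑ w, ((if a = w then (1 : ℝ) else 0) + (if b = w then 1 else 0)) * P w j := by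
        simp [add_mul, Finset.sum_add_distrib]
    _ ≤ _ := Finset.sum_le_sum fun w _ => mul_le_mul_of_nonneg_right (h1 w) (hP w j)

theorem mres_step (F : D → ℝ) (e : D) (i a : C) (he : src e = i)
    (ha : rng e = a) (P : Matrix C C ℝ) (hP : ∀ x y, 0 ≤ P x y) (j : C) :
    P a j ≤ (Mres src rng C F 0 * P) i j := by
  have h1 : 1 ≤ Mres src rng C F 0 i a := by
    unfold Mres Amat
    have := Finset.single_le_sum (f := fun e => Real.exp (-0 * F e))
      (s := Finset.univ.filter (fun e => src e = i ∧ rng e = a))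
      (fun _ _ => (Real.exp_pos _).le) (Finset.mem_filter.2 ⟨Finset.mem_univ e, he, ha⟩)
    simpa using this
  rw [Matrix.mul_apply]
  refine le_trans ?_ (Finset.single_le_sum (f := fun u => Mres src rng C F 0 i u * P u j)
    (fun u _ => mul_nonneg (mres_nonneg src rng C F 0 i u) (hP u j)) (Finset.mem_univ a))
  have := hP a j
  nlinarith

theorem walk_le (F : D → ℝ) (μ : List D) (i j : C) (h : Wk src rng C i μ j) :
    1 ≤ ((Mres src rng C F 0) ^ μ.length) i j := by
  induction μ generalizing i with
  | nil =>
    have : i = j := Subtype.ext h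
    subst this
    simp
  | cons e μ ih =>
    obtain ⟨h1, h2, h3, h4⟩ := h
    rw [List.length_cons, pow_succ']
    exact (ih ⟨rng e, h3⟩ h4).trans (mres_step src rng C F e i ⟨rng e, h3⟩ h1 rfl _
      (pow_entry_nonneg _ (mres_nonneg src rng C F 0) _) j)

theorem one_lt_mres (F : D → ℝ) (hC : GIsComponent src rng C) (hnc : ¬ IsCircular src rng C) :
    1 < specRad (Mres src rng C F 0) := by
  obtain ⟨e, f, hef, hs, hse, hre, hrf⟩ := exists_branch src rng C hC hnc
  obtain ⟨p, hp⟩ := comp_connected src rng C hC (rng e) (src e) hre hse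
  obtain ⟨q, hq⟩ := comp_connected src rng C hC (rng f) (src e) hrf hse
  have hep : Wk src rng C (src e) (e :: p) (src e) := ⟨rfl, hse, hre, hp⟩
  have hfq : Wk src rng C (src e) (f :: q) (src e) := ⟨hs.symm, hs ▸ hse, hrf, hq⟩
  have h1 := walk_le src rng C F (p ++ f :: q) ⟨rng e, hre⟩ ⟨src e, hse⟩
    ((wk_append _ _ _ _ _ _ _).2 ⟨_, hp, hfq⟩)
  have h2 := walk_le src rng C F (q ++ e :: p) ⟨rng f, hrf⟩ ⟨src e, hse⟩
    ((wk_append _ _ _ _ _ _ _).2 ⟨_, hq, hep⟩)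
  have hl : (q ++ e :: p).length = (p ++ f :: q).length := by simp; omega
  rw [hl] at h2
  refine one_lt_specRad _ (mres_nonneg src rng C F 0) ⟨src e, hse⟩ ((p ++ f :: q).length + 1)
    (Nat.succ_pos _) ?_
  rw [pow_succ']
  have := mres_branch src rng C F e f hef ⟨src e, hse⟩ ⟨rng e, hre⟩ ⟨rng f, hrf⟩ rfl hs.symm rfl
    rfl _ (pow_entry_nonneg _ (mres_nonneg src rng C F 0) (p ++ f :: q).length) ⟨src e, hse⟩
  linarith

theorem main_aux (F : D → ℝ) (hC : GIsComponent src rng C) (hnc : ¬ IsCircular src rng C)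
    (hF : ∀ μ : List D, LoopIn src rng C μ → Fpath F μ < 0) :
    ∃ β₀ : ℝ, β₀ < 0 ∧ specRad (Mres src rng C F β₀) = 1 ∧
      (∀ β : ℝ, specRad (Mres src rng C F β) = 1 → β = β₀) ∧
      (∀ β : ℝ, specRad (Mres src rng C F β) < 1 ↔ β < β₀) := by
  obtain ⟨c, h, hc, hh⟩ := exists_potential src rng C F hF
  refine real_part (fun β => specRad (Mres src rng C F β)) c (∑ e, |F e|) hc
    (one_lt_mres src rng C F hC hnc) ?_ ?_
  · intro β t ht
    exact specRad_compare' _ _ (mres_nonneg src rng C F β) (t * c) (fun i => t * h i)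
      (mres_lower src rng C F c h hh β t ht)
  · intro β t ht
    exact specRad_compare' _ _ (mres_nonneg src rng C F (β + t)) _ (fun _ => 0)
      (mres_upper src rng C F β t ht)

end Restricted

/-- For a non-circular component `C` all of whose loops satisfy `F(μ) < 0`, there is a
unique `β₀` with `ρ(A(β₀)^C) = 1`; it is negative, and `ρ(A(β)^C) < 1 ↔ β < β₀`. -/
theorem specRad_component_neg_type {V E : Type*} [Fintype V] [DecidableEq V] [Fintype E]
    (src rng : E → V) (F : E → ℝ)
    (C : Set V) (hC : GIsComponent src rng C) (hnc : ¬ IsCircular src rng C)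
    (hF : ∀ μ : List E, LoopIn src rng C μ → Fpath F μ < 0) :
    ∃ β₀ : ℝ, β₀ < 0 ∧ specRadOn (Amat src rng F β₀) C = 1 ∧
      (∀ β : ℝ, specRadOn (Amat src rng F β) C = 1 → β = β₀) ∧
      (∀ β : ℝ, specRadOn (Amat src rng F β) C < 1 ↔ β < β₀) := by
  letI : Fintype C := (Set.toFinite C).fintype
  letI : DecidableEq C := Classical.decEq _
  exact main_aux src rng C F hC hnc hF
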